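/- arXiv:1208.5460 — 2 statements merged into one kernel-verified Lean document; each statement's English description precedes it below -/
import Mathlib

section
/- There exists an absolute constant c > 0 such that for every finite family Z of at least two points in the unit square [0,1)², Disc(Z) ≥ c·(log #Z)/(#Z). -/
open scoped Classical

/-- The discrepancy of a finite family `z : Fin m → ℝ × ℝ` of points of the unit
square: the supremum, over axis-parallel rectangles `[a,b] × [c,d] ⊆ [0,1]²`, of
`|#(Z ∩ R)/#Z − (b−a)(d−c)|`. -/
noncomputable def Disc {m : ℕ} (z : Fin m → ℝ × ℝ) : ℝ :=
  sSup {t : ℝ | ∃ a b c d : ℝ, 0 ≤ a ∧ a ≤ b ∧ b ≤ 1 ∧ 0 ≤ c ∧ c ≤ d ∧ d ≤ 1 ∧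
    t = |((Finset.univ.filter
            (fun i => (z i).1 ∈ Set.Icc a b ∧ (z i).2 ∈ Set.Icc c d)).card : ℝ) / m
          - (b - a) * (d - c)|}


noncomputable def gmax (A : Finset ℕ) (hA : A.Nonempty) (f : ℕ → ℝ) : ℝ := A.sup' hA f
noncomputable def gmin (A : Finset ℕ) (hA : A.Nonempty) (f : ℕ → ℝ) : ℝ := A.inf' hA f
noncomputable def hh (A : Finset ℕ) (hA : A.Nonempty) (f : ℕ → ℝ) : ℝ := gmax A hA f - gmin A hA f
noncomputable def mid (A : Finset ℕ) (hA : A.Nonempty) (f : ℕ → ℝ) : ℝ :=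
  (gmax A hA f + gmin A hA f) / 2

lemma hh_nonneg (A : Finset ℕ) (hA : A.Nonempty) (f : ℕ → ℝ) : 0 ≤ hh A hA f := by
  obtain ⟨a, ha⟩ := hA
  have h1 : f a ≤ gmax A ⟨a, ha⟩ f := Finset.le_sup' f ha
  have h2 : gmin A ⟨a, ha⟩ f ≤ f a := Finset.inf'_le f ha
  unfold hh; linarith

lemma hh_split (A B U : Finset ℕ) (hA : A.Nonempty) (hB : B.Nonempty) (hU : U.Nonempty)
    (hAU : A ⊆ U) (hBU : B ⊆ U) (f : ℕ → ℝ) :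
    (hh A hA f + hh B hB f) / 2 + |mid A hA f - mid B hB f| ≤ hh U hU f := by
  have h1 : gmax A hA f ≤ gmax U hU f := Finset.sup'_mono f hAU hA
  have h2 : gmax B hB f ≤ gmax U hU f := Finset.sup'_mono f hBU hB
  have h3 : gmin U hU f ≤ gmin A hA f := Finset.inf'_mono f hAU hA
  have h4 : gmin U hU f ≤ gmin B hB f := Finset.inf'_mono f hBU hB
  unfold hh mid
  rcases abs_cases ((gmax A hA f + gmin A hA f) / 2 - (gmax B hB f + gmin B hB f) / 2) with h | h <;>
    linarith [h.1]

lemma mid_le (A : Finset ℕ) (hA : A.Nonempty) (f g : ℕ → ℝ) (c : ℝ)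
    (h : ∀ k ∈ A, g k ≤ f k + c) : mid A hA g ≤ mid A hA f + c := by
  have h1 : gmax A hA g ≤ gmax A hA f + c := by
    apply Finset.sup'_le
    intro k hk
    have : f k ≤ gmax A hA f := Finset.le_sup' f hk
    linarith [h k hk]
  have h2 : gmin A hA g - c ≤ gmin A hA f := by
    apply Finset.le_inf'
    intro k hk
    have : gmin A hA g ≤ g k := Finset.inf'_le g hk
    linarith [h k hk]
  unfold mid; linarith

lemma mid_ge (A : Finset ℕ) (hA : A.Nonempty) (f g : ℕ → ℝ) (c : ℝ)
    (h : ∀ k ∈ A, f k + c ≤ g k) : mid A hA f + c ≤ mid A hA g := by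
  have := mid_le A hA g f (-c) (fun k hk => by linarith [h k hk])
  linarith

noncomputable def NN {m : ℕ} (z : Fin m → ℝ × ℝ) (Y : ℕ) (a b : ℕ) : Finset (Fin m) :=
  Finset.univ.filter (fun i => (a : ℝ) / Y < (z i).2 ∧ (z i).2 ≤ (b : ℝ) / Y)

noncomputable def DD {m : ℕ} (z : Fin m → ℝ × ℝ) (K Y : ℕ) (j k : ℕ) : ℝ :=
  ((Finset.univ.filter (fun i => (z i).1 ≤ (j : ℝ) / K ∧ (z i).2 ≤ (k : ℝ) / Y)).card : ℝ)
    - m * ((j : ℝ) / K) * ((k : ℝ) / Y)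

noncomputable def Good {m : ℕ} (z : Fin m → ℝ × ℝ) (K Y : ℕ) (a b d j : ℕ) : Prop :=
  ∀ i ∈ NN z Y a b, ¬ ((j : ℝ) / K < (z i).1 ∧ (z i).1 ≤ ((j + d : ℕ) : ℝ) / K)

lemma DD_diff {m : ℕ} (z : Fin m → ℝ × ℝ) (K Y : ℕ) (a b d j : ℕ) (hY : 0 < Y) (hK : 0 < K)
    (hg : Good z K Y a b d j) :
    ∃ E : ℝ, ∀ k, a ≤ k → k ≤ b → DD z K Y (j + d) k - DD z K Y j k
      = E - m * ((d : ℝ) / K) * ((k : ℝ) / Y) := by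
  refine ⟨((Finset.univ.filter (fun i => ((j : ℝ) / K < (z i).1 ∧
    (z i).1 ≤ ((j + d : ℕ) : ℝ) / K) ∧ (z i).2 ≤ (a : ℝ) / Y)).card : ℝ), ?_⟩
  intro k hak hkb
  have hY' : (0 : ℝ) < Y := by exact_mod_cast hY
  have hK' : (0 : ℝ) < K := by exact_mod_cast hK
  have e : (Finset.univ.filter (fun i => (z i).1 ≤ ((j + d : ℕ) : ℝ) / K ∧ (z i).2 ≤ (k : ℝ) / Y))
      = (Finset.univ.filter (fun i => (z i).1 ≤ (j : ℝ) / K ∧ (z i).2 ≤ (k : ℝ) / Y)) ∪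
       (Finset.univ.filter (fun i => ((j : ℝ) / K < (z i).1 ∧
    (z i).1 ≤ ((j + d : ℕ) : ℝ) / K) ∧ (z i).2 ≤ (a : ℝ) / Y)) := by
    ext i
    simp only [Finset.mem_filter, Finset.mem_univ, true_and, Finset.mem_union]
    have hj : (j : ℝ) / K ≤ ((j + d : ℕ) : ℝ) / K := by
      gcongr; omega
    have hk1 : (a : ℝ) / Y ≤ (k : ℝ) / Y := by gcongr
    have hk2 : (k : ℝ) / Y ≤ (b : ℝ) / Y := by gcongr
    constructor
    · rintro ⟨h1, h2⟩
      by_cases h3 : (z i).1 ≤ (j : ℝ) / K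
      · exact Or.inl ⟨h3, h2⟩
      · right
        push Not at h3
        refine ⟨⟨h3, h1⟩, ?_⟩
        by_contra h4
        push Not at h4
        exact hg i (by simp only [NN, Finset.mem_filter, Finset.mem_univ, true_and]
                       exact ⟨h4, h2.trans hk2⟩) ⟨h3, h1⟩
    · rintro (⟨h1, h2⟩ | ⟨⟨h1, h2⟩, h3⟩)
      · exact ⟨h1.trans hj, h2⟩
      · exact ⟨h2, h3.trans hk1⟩
  have hd : Disjoint (Finset.univ.filter (fun i => (z i).1 ≤ (j : ℝ) / K ∧ (z i).2 ≤ (k : ℝ) / Y))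
       (Finset.univ.filter (fun i => ((j : ℝ) / K < (z i).1 ∧
    (z i).1 ≤ ((j + d : ℕ) : ℝ) / K) ∧ (z i).2 ≤ (a : ℝ) / Y)) := by
    rw [Finset.disjoint_left]
    intro i
    simp only [Finset.mem_filter, Finset.mem_univ, true_and]
    rintro ⟨h1, _⟩ ⟨⟨h2, _⟩, _⟩
    linarith
  unfold DD
  rw [e, Finset.card_union_of_disjoint hd]
  push_cast
  ring

lemma bad_card {m : ℕ} (z : Fin m → ℝ × ℝ) (K Y : ℕ) (a b d : ℕ) (hK : 0 < K) (J : Finset ℕ) :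
    (J.filter (fun j => ¬ Good z K Y a b d j)).card ≤ (NN z Y a b).card * d := by
  have hK' : (0 : ℝ) < K := by exact_mod_cast hK
  have hsub : J.filter (fun j => ¬ Good z K Y a b d j) ⊆
      (NN z Y a b).biUnion (fun i => Finset.Ico (⌈(z i).1 * K⌉₊ - d) ⌈(z i).1 * K⌉₊) := by
    intro j hj
    simp only [Finset.mem_filter, Good, not_forall, not_not] at hj
    obtain ⟨_, i, hi, h1, h2⟩ := hj
    rw [Finset.mem_biUnion]
    refine ⟨i, hi, ?_⟩
    rw [div_lt_iff₀ hK'] at h1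
    rw [le_div_iff₀ hK'] at h2
    have h3 : j < ⌈(z i).1 * K⌉₊ := Nat.lt_ceil.mpr h1
    have h4 : ⌈(z i).1 * K⌉₊ ≤ j + d := Nat.ceil_le.mpr h2
    rw [Finset.mem_Ico]; omega
  refine (Finset.card_le_card hsub).trans (Finset.card_biUnion_le_card_mul _ _ _ ?_)
  intro i _
  rw [Nat.card_Ico]; omega

lemma icc_ne (u s : ℕ) : (Finset.Icc u (u + s)).Nonempty := ⟨u, by simp⟩

lemma mid_gain {m : ℕ} (z : Fin m → ℝ × ℝ) (K Y : ℕ) (u s a d j : ℕ) (hY : 0 < Y) (hK : 0 < K)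
    (hua : u ≤ a) (hau : a + 3 * s ≤ u + 4 * s)
    (hg : Good z K Y u (u + 4 * s) d j) :
    m * ((d : ℝ) / K) * ((s : ℝ) / Y) ≤
      |mid _ (icc_ne a s) (DD z K Y j) - mid _ (icc_ne (a + 2 * s) s) (DD z K Y j)| +
      |mid _ (icc_ne a s) (DD z K Y (j + d)) - mid _ (icc_ne (a + 2 * s) s) (DD z K Y (j + d))| := by
  obtain ⟨E, hE⟩ := DD_diff z K Y u (u + 4 * s) d j hY hK hg
  have h1 := mid_ge _ (icc_ne a s) (DD z K Y j) (DD z K Y (j + d))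
    (E - m * ((d : ℝ) / K) * (((a + s : ℕ) : ℝ) / Y)) (by
      intro k hk
      rw [Finset.mem_Icc] at hk
      have := hE k (by omega) (by omega)
      have h : m * ((d : ℝ) / K) * ((k : ℝ) / Y) ≤ m * ((d : ℝ) / K) * (((a + s : ℕ) : ℝ) / Y) := by
        gcongr; exact hk.2
      linarith)
  have h2 := mid_le _ (icc_ne (a + 2 * s) s) (DD z K Y j) (DD z K Y (j + d))
    (E - m * ((d : ℝ) / K) * (((a + 2 * s : ℕ) : ℝ) / Y)) (by
      intro k hk
      rw [Finset.mem_Icc] at hk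
      have := hE k (by omega) (by omega)
      have h : m * ((d : ℝ) / K) * (((a + 2 * s : ℕ) : ℝ) / Y) ≤ m * ((d : ℝ) / K) * ((k : ℝ) / Y) := by
        gcongr; exact hk.1
      linarith)
  have h3 : m * ((d : ℝ) / K) * (((a + 2 * s : ℕ) : ℝ) / Y) -
      m * ((d : ℝ) / K) * (((a + s : ℕ) : ℝ) / Y) = m * ((d : ℝ) / K) * ((s : ℝ) / Y) := by
    push_cast; ring
  have h4 := neg_abs_le (mid _ (icc_ne a s) (DD z K Y j) - mid _ (icc_ne (a + 2 * s) s) (DD z K Y j))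
  have h4' := neg_abs_le (mid _ (icc_ne (a + 2 * s) s) (DD z K Y j) - mid _ (icc_ne a s) (DD z K Y j))
  rw [abs_sub_comm] at h4'
  have h5 := le_abs_self (mid _ (icc_ne a s) (DD z K Y (j + d)) - mid _ (icc_ne (a + 2 * s) s) (DD z K Y (j + d)))
  linarith

lemma sum_gain {m : ℕ} (z : Fin m → ℝ × ℝ) (K Y : ℕ) (u s a d : ℕ) (hY : 0 < Y) (hK : 0 < K)
    (hua : u ≤ a) (hau : a + 3 * s ≤ u + 4 * s) (hd : d ≤ K) (w : ℝ) (hw : 0 ≤ w)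
    (hw' : w ≤ m * ((d : ℝ) / K) * ((s : ℝ) / Y)) :
    w * ((K : ℝ) - d - (NN z Y u (u + 4 * s)).card * d) ≤
      2 * ∑ j ∈ Finset.range K,
      |mid _ (icc_ne a s) (DD z K Y j) - mid _ (icc_ne (a + 2 * s) s) (DD z K Y j)| := by
  set F : ℕ → ℝ := fun j =>
    |mid _ (icc_ne a s) (DD z K Y j) - mid _ (icc_ne (a + 2 * s) s) (DD z K Y j)| with hF
  have hF0 : ∀ j, 0 ≤ F j := fun j => abs_nonneg _
  set J := (Finset.range (K - d)).filter (fun j => Good z K Y u (u + 4 * s) d j) with hJ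
  have h1 : ∑ j ∈ Finset.range (K - d), F j ≤ ∑ j ∈ Finset.range K, F j :=
    Finset.sum_le_sum_of_subset_of_nonneg (Finset.range_mono (by omega)) (fun j _ _ => hF0 j)
  have h2 : ∑ j ∈ Finset.range (K - d), F (j + d) ≤ ∑ j ∈ Finset.range K, F j := by
    have := Finset.sum_range_add_sum_Ico F hd
    rw [Finset.sum_Ico_eq_sum_range] at this
    have h0 : 0 ≤ ∑ j ∈ Finset.range d, F j := Finset.sum_nonneg (fun j _ => hF0 j)
    have h00 : ∑ j ∈ Finset.range (K - d), F (j + d) = ∑ j ∈ Finset.range (K - d), F (d + j) :=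
      Finset.sum_congr rfl (fun j _ => by rw [add_comm])
    linarith
  have h3 : (J.card : ℝ) * w ≤ ∑ j ∈ J, (F j + F (j + d)) := by
    rw [← nsmul_eq_mul]
    apply Finset.card_nsmul_le_sum
    intro j hj
    exact hw'.trans (mid_gain z K Y u s a d j hY hK hua hau (Finset.mem_filter.mp hj).2)
  have h4 : ∑ j ∈ J, (F j + F (j + d)) ≤ ∑ j ∈ Finset.range (K - d), (F j + F (j + d)) :=
    Finset.sum_le_sum_of_subset_of_nonneg (Finset.filter_subset _ _)
      (fun j _ _ => add_nonneg (hF0 j) (hF0 _))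
  rw [Finset.sum_add_distrib (s := Finset.range (K - d))] at h4
  have h5 : J.card + ((Finset.range (K - d)).filter
      (fun j => ¬ Good z K Y u (u + 4 * s) d j)).card = (Finset.range (K - d)).card := by
    rw [hJ]
    convert Finset.card_filter_add_card_filter_not (s := Finset.range (K - d))
      (fun j => Good z K Y u (u + 4 * s) d j)
  rw [Finset.card_range] at h5
  have h6 := bad_card z K Y u (u + 4 * s) d hK (Finset.range (K - d))
  have h7 : (K : ℝ) - d - (NN z Y u (u + 4 * s)).card * d ≤ J.card := by
    have : K ≤ J.card + (NN z Y u (u + 4 * s)).card * d + d := by omega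
    have : (K : ℝ) ≤ J.card + (NN z Y u (u + 4 * s)).card * d + d := by exact_mod_cast this
    linarith
  have h8 := mul_le_mul_of_nonneg_left h7 hw
  linarith

noncomputable def HH {m : ℕ} (z : Fin m → ℝ × ℝ) (K Y : ℕ) (u s : ℕ) : ℝ :=
  ∑ j ∈ Finset.range K, hh _ (icc_ne u s) (DD z K Y j)

lemma NN_add {m : ℕ} (z : Fin m → ℝ × ℝ) (Y a b c : ℕ) (hab : a ≤ b) (hbc : b ≤ c) :
    (NN z Y a c).card = (NN z Y a b).card + (NN z Y b c).card := by
  have h1 : (a : ℝ) / Y ≤ (b : ℝ) / Y := by gcongr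
  have h2 : (b : ℝ) / Y ≤ (c : ℝ) / Y := by gcongr
  rw [← Finset.card_union_of_disjoint]
  · congr 1
    ext i
    simp only [NN, Finset.mem_filter, Finset.mem_univ, true_and, Finset.mem_union]
    constructor
    · rintro ⟨h3, h4⟩
      rcases le_or_gt (z i).2 ((b : ℝ) / Y) with h | h
      · exact Or.inl ⟨h3, h⟩
      · exact Or.inr ⟨h, h4⟩
    · rintro (⟨h3, h4⟩ | ⟨h3, h4⟩)
      · exact ⟨h3, h4.trans h2⟩
      · exact ⟨h1.trans_lt h3, h4⟩
  · rw [Finset.disjoint_left]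
    intro i
    simp only [NN, Finset.mem_filter, Finset.mem_univ, true_and]
    rintro ⟨_, h1⟩ ⟨h2, _⟩
    linarith

lemma HH_step {m : ℕ} (z : Fin m → ℝ × ℝ) (K Y : ℕ) (u s d : ℕ) (hY : 0 < Y) (hK : 0 < K)
    (hd : d ≤ K) (w : ℝ) (hw : 0 ≤ w)
    (hw' : w ≤ m * ((d : ℝ) / K) * ((s : ℝ) / Y)) :
    (HH z K Y u s + HH z K Y (u + s) s + HH z K Y (u + 2 * s) s + HH z K Y (u + 3 * s) s) / 4
      + w / 2 * ((K : ℝ) - d - (NN z Y u (u + 4 * s)).card * d) ≤ HH z K Y u (4 * s) := by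
  have key : ∀ a, u ≤ a → a + 3 * s ≤ u + 4 * s →
    (HH z K Y a s + HH z K Y (a + 2 * s) s) / 2
      + w / 2 * ((K : ℝ) - d - (NN z Y u (u + 4 * s)).card * d) ≤ HH z K Y u (4 * s) := by
    intro a ha1 ha2
    have h1 := sum_gain z K Y u s a d hY hK ha1 ha2 hd w hw hw'
    have h2 : ∑ j ∈ Finset.range K, ((hh _ (icc_ne a s) (DD z K Y j) +
        hh _ (icc_ne (a + 2 * s) s) (DD z K Y j)) / 2 +
        |mid _ (icc_ne a s) (DD z K Y j) - mid _ (icc_ne (a + 2 * s) s) (DD z K Y j)|)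
        ≤ HH z K Y u (4 * s) := by
      apply Finset.sum_le_sum
      intro j _
      apply hh_split
      · apply Finset.Icc_subset_Icc <;> omega
      · apply Finset.Icc_subset_Icc <;> omega
    rw [Finset.sum_add_distrib, ← Finset.sum_div, Finset.sum_add_distrib] at h2
    unfold HH at h2 ⊢
    linarith
  have k1 := key u le_rfl (by omega)
  have k2 := key (u + s) (by omega) (by omega)
  have e : u + s + 2 * s = u + 3 * s := by ring
  rw [e] at k2
  linarith

lemma HH_main {m : ℕ} (z : Fin m → ℝ × ℝ) (T : ℕ) (hT : 4 ^ T ≤ m) (t : ℕ) :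
    t ≤ T → ∀ u, (4 : ℝ) ^ (T + 2) * ((t : ℝ) / 128 *
      (15 / 16 - (NN z (4 ^ T) u (u + 4 ^ t)).card / (16 * 4 ^ t))) ≤
      HH z (4 ^ (T + 2)) (4 ^ T) u (4 ^ t) := by
  induction t with
  | zero =>
    intro _ u
    simp only [Nat.cast_zero, zero_div, zero_mul, mul_zero]
    exact Finset.sum_nonneg (fun j _ => hh_nonneg _ _ _)
  | succ t ih =>
    intro ht u
    have hdK : 4 ^ (T - (t + 1)) ≤ 4 ^ (T + 2) := Nat.pow_le_pow_right (by norm_num) (by omega)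
    have hm : (4 : ℝ) ^ T ≤ m := by exact_mod_cast hT
    obtain ⟨r, rfl⟩ : ∃ r, T = r + (t + 1) := ⟨T - (t + 1), by omega⟩
    have hr : r + (t + 1) - (t + 1) = r := by omega
    rw [hr] at hdK
    have hw' : (1 / 64 : ℝ) ≤ m * (((4 ^ r : ℕ) : ℝ) / ((4 ^ (r + (t + 1) + 2) : ℕ) : ℝ)) *
        (((4 ^ t : ℕ) : ℝ) / ((4 ^ (r + (t + 1)) : ℕ) : ℝ)) := by
      have e : (4 : ℝ) ^ (r + (t + 1)) * (((4 ^ r : ℕ) : ℝ) / ((4 ^ (r + (t + 1) + 2) : ℕ) : ℝ)) *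
        (((4 ^ t : ℕ) : ℝ) / ((4 ^ (r + (t + 1)) : ℕ) : ℝ)) = 1 / 64 := by
        push_cast
        simp only [pow_add]
        field_simp
        norm_num
      rw [← e]
      gcongr
    have st := HH_step z (4 ^ (r + (t + 1) + 2)) (4 ^ (r + (t + 1))) u (4 ^ t) (4 ^ r)
      (by positivity) (by positivity) hdK (1 / 64) (by norm_num) hw'
    have i0 := ih (by omega) u
    have i1 := ih (by omega) (u + 4 ^ t)
    have i2 := ih (by omega) (u + 2 * 4 ^ t)
    have i3 := ih (by omega) (u + 3 * 4 ^ t)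
    have hp : 0 < 4 ^ t := by positivity
    have n1 := NN_add z (4 ^ (r + (t + 1))) u (u + 4 ^ t) (u + 4 * 4 ^ t) (Nat.le_add_right _ _) (by omega)
    have n2 := NN_add z (4 ^ (r + (t + 1))) (u + 4 ^ t) (u + 2 * 4 ^ t) (u + 4 * 4 ^ t)
      (by omega) (by omega)
    have n3 := NN_add z (4 ^ (r + (t + 1))) (u + 2 * 4 ^ t) (u + 3 * 4 ^ t) (u + 4 * 4 ^ t)
      (by omega) (by omega)
    rw [show u + 4 ^ t + 4 ^ t = u + 2 * 4 ^ t by ring] at i1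
    rw [show u + 2 * 4 ^ t + 4 ^ t = u + 3 * 4 ^ t by ring] at i2
    rw [show u + 3 * 4 ^ t + 4 ^ t = u + 4 * 4 ^ t by ring] at i3
    rw [show 4 ^ (t + 1) = 4 * 4 ^ t by ring]
    refine le_trans ?_ st
    have q : ((NN z (4 ^ (r + (t + 1))) u (u + 4 * 4 ^ t)).card : ℝ) =
       (NN z (4 ^ (r + (t + 1))) u (u + 4 ^ t)).card +
       (NN z (4 ^ (r + (t + 1))) (u + 4 ^ t) (u + 2 * 4 ^ t)).card +
       (NN z (4 ^ (r + (t + 1))) (u + 2 * 4 ^ t) (u + 3 * 4 ^ t)).card +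
       (NN z (4 ^ (r + (t + 1))) (u + 3 * 4 ^ t) (u + 4 * 4 ^ t)).card := by
      rw [n1, n2, n3]; push_cast; ring
    set N := ((NN z (4 ^ (r + (t + 1))) u (u + 4 * 4 ^ t)).card : ℝ)
    have hK : ((4 ^ (r + (t + 1) + 2) : ℕ) : ℝ) = 64 * 4 ^ r * 4 ^ t := by
      push_cast; simp only [pow_add]; ring
    have hK' : (4 : ℝ) ^ (r + (t + 1) + 2) = 64 * 4 ^ r * 4 ^ t := by
      simp only [pow_add]; ring
    rw [hK'] at i0 i1 i2 i3 ⊢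
    rw [hK]
    have ht1 : (1 : ℝ) ≤ 4 ^ t := one_le_pow₀ (by norm_num)
    have hr1 : (0 : ℝ) < 4 ^ r := by positivity
    have gain : (64 * 4 ^ r * 4 ^ t : ℝ) * (1 / 128 * (15 / 16 - N / (16 * (4 * 4 ^ t)))) ≤
        1 / 64 / 2 * (64 * 4 ^ r * 4 ^ t - ((4 ^ r : ℕ) : ℝ) - N * ((4 ^ r : ℕ) : ℝ)) := by
      push_cast
      have e1 : (64 * 4 ^ r * 4 ^ t : ℝ) * (1 / 128 * (15 / 16 - N / (16 * (4 * 4 ^ t)))) =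
        1 / 128 * (60 * 4 ^ r * 4 ^ t - N * 4 ^ r) := by
        field_simp; ring
      rw [e1]
      have : (4 : ℝ) ^ r * 1 ≤ 4 ^ r * 4 ^ t := by gcongr
      linarith
    have avg := add_le_add (add_le_add (add_le_add i0 i1) i2) i3
    have avg2 := div_le_div_of_nonneg_right avg (by norm_num : (0 : ℝ) ≤ 4)
    refine le_trans (le_of_eq ?_) (add_le_add avg2 gain)
    rw [q]
    push_cast
    field_simp
    ring

lemma final {m : ℕ} (z : Fin m → ℝ × ℝ) (T : ℕ) (hT : 4 ^ T ≤ m) (hT' : m < 4 ^ (T + 1)) :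
    ∃ j k, j ≤ 4 ^ (T + 2) ∧ k ≤ 4 ^ T ∧ (T : ℝ) / 512 ≤ |DD z (4 ^ (T + 2)) (4 ^ T) j k| := by
  have h := HH_main z T hT T le_rfl 0
  have hN : ((NN z (4 ^ T) 0 (0 + 4 ^ T)).card : ℝ) / (16 * 4 ^ T) ≤ 1 / 4 := by
    have h1 : (NN z (4 ^ T) 0 (0 + 4 ^ T)).card ≤ m := by
      simpa using Finset.card_le_univ (NN z (4 ^ T) 0 (0 + 4 ^ T))
    have h2 : (NN z (4 ^ T) 0 (0 + 4 ^ T)).card ≤ 4 * 4 ^ T := by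
      rw [pow_succ] at hT'; omega
    have h3 : ((NN z (4 ^ T) 0 (0 + 4 ^ T)).card : ℝ) ≤ 4 * 4 ^ T := by exact_mod_cast h2
    rw [div_le_iff₀ (by positivity)]
    linarith
  have h2 : ∑ j ∈ Finset.range (4 ^ (T + 2)), (T : ℝ) / 256 ≤ HH z (4 ^ (T + 2)) (4 ^ T) 0 (4 ^ T) := by
    refine le_trans ?_ h
    rw [Finset.sum_const, Finset.card_range, nsmul_eq_mul]
    push_cast
    have : (T : ℝ) / 256 = T / 128 * (1 / 2) := by ring
    rw [this]
    gcongr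
    linarith
  obtain ⟨j, hj, hjj⟩ := Finset.exists_le_of_sum_le (by simp) h2
  obtain ⟨k1, hk1, e1⟩ := Finset.exists_mem_eq_sup' (icc_ne 0 (4 ^ T)) (DD z (4 ^ (T + 2)) (4 ^ T) j)
  obtain ⟨k2, hk2, e2⟩ := Finset.exists_mem_eq_inf' (icc_ne 0 (4 ^ T)) (DD z (4 ^ (T + 2)) (4 ^ T) j)
  rw [Finset.mem_range] at hj
  rw [Finset.mem_Icc] at hk1 hk2
  unfold hh gmax gmin at hjj
  rw [e1, e2] at hjj
  by_contra hcon
  push Not at hcon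
  have c1 := hcon j k1 hj.le (by omega)
  have c2 := hcon j k2 hj.le (by omega)
  rw [abs_lt] at c1 c2
  linarith [c1.2, c2.1]

lemma Disc_ge {m : ℕ} (z : Fin m → ℝ × ℝ) (a b c d : ℝ) (h : 0 ≤ a ∧ a ≤ b ∧ b ≤ 1 ∧ 0 ≤ c ∧ c ≤ d ∧ d ≤ 1) :
   |((Finset.univ.filter
            (fun i => (z i).1 ∈ Set.Icc a b ∧ (z i).2 ∈ Set.Icc c d)).card : ℝ) / m
          - (b - a) * (d - c)| ≤ Disc z := by
  apply le_csSup
  · refine ⟨2, ?_⟩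
    rintro t ⟨a, b, c, d, h1, h2, h3, h4, h5, h6, rfl⟩
    have q1 : ((Finset.univ.filter
            (fun i => (z i).1 ∈ Set.Icc a b ∧ (z i).2 ∈ Set.Icc c d)).card : ℝ) / m ≤ 1 := by
      apply div_le_one_of_le₀ _ (by positivity)
      exact_mod_cast (Finset.card_le_univ _).trans (by simp)
    have q2 : 0 ≤ ((Finset.univ.filter
            (fun i => (z i).1 ∈ Set.Icc a b ∧ (z i).2 ∈ Set.Icc c d)).card : ℝ) / m := by positivity
    have q3 : 0 ≤ (b - a) * (d - c) := mul_nonneg (by linarith) (by linarith)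
    have q4 : (b - a) * (d - c) ≤ 1 := mul_le_one₀ (by linarith) (by linarith) (by linarith)
    rw [abs_le]; constructor <;> linarith
  · exact ⟨a, b, c, d, h.1, h.2.1, h.2.2.1, h.2.2.2.1, h.2.2.2.2.1, h.2.2.2.2.2, rfl⟩

theorem stmt1 :
    ∃ C : ℝ, 0 < C ∧ ∀ (m : ℕ), 2 ≤ m → ∀ z : Fin m → ℝ × ℝ,
      (∀ i, z i ∈ Set.Ico (0 : ℝ) 1 ×ˢ Set.Ico (0 : ℝ) 1) →
      C * Real.log m / m ≤ Disc z := by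
  refine ⟨1 / 1026, by norm_num, ?_⟩
  intro m hm z hz
  have hm0 : (0 : ℝ) < m := by exact_mod_cast (by omega : 0 < m)
  rw [div_le_iff₀ hm0]
  have b1 : 1 ≤ Disc z * m := by
    have i : Fin m := ⟨0, by omega⟩
    have hi := hz i
    simp only [Set.mem_prod, Set.mem_Ico] at hi
    have := Disc_ge z (z i).1 (z i).1 (z i).2 (z i).2
      ⟨hi.1.1, le_rfl, hi.1.2.le, hi.2.1, le_rfl, hi.2.2.le⟩
    have h2 := (le_abs_self _).trans this
    rw [sub_self, zero_mul, sub_zero, div_le_iff₀ hm0] at h2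
    refine le_trans ?_ h2
    have : 0 < (Finset.univ.filter
            (fun i' => (z i').1 ∈ Set.Icc (z i).1 (z i).1 ∧ (z i').2 ∈ Set.Icc (z i).2 (z i).2)).card :=
      Finset.card_pos.mpr ⟨i, by simp⟩
    exact_mod_cast this
  set T := Nat.log 4 m with hT
  have hT1 : 4 ^ T ≤ m := Nat.pow_log_le_self 4 (by omega)
  have hT2 : m < 4 ^ (T + 1) := Nat.lt_pow_succ_log_self (by norm_num) m
  have b2 : (T : ℝ) / 512 ≤ Disc z * m := by
    obtain ⟨j, k, hj, hk, h⟩ := final z T hT1 hT2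
    refine h.trans ?_
    have hj' : (j : ℝ) / ((4 ^ (T + 2) : ℕ) : ℝ) ≤ 1 :=
      div_le_one_of_le₀ (by exact_mod_cast hj) (by positivity)
    have hk' : (k : ℝ) / ((4 ^ T : ℕ) : ℝ) ≤ 1 :=
      div_le_one_of_le₀ (by exact_mod_cast hk) (by positivity)
    have := Disc_ge z 0 ((j : ℝ) / ((4 ^ (T + 2) : ℕ) : ℝ)) 0 ((k : ℝ) / ((4 ^ T : ℕ) : ℝ))
      ⟨le_rfl, by positivity, hj', le_rfl, by positivity, hk'⟩
    refine le_trans (le_of_eq ?_) (mul_le_mul_of_nonneg_right this hm0.le)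
    rw [← abs_of_pos hm0, ← abs_mul, abs_of_pos hm0]
    congr 1
    have e : (Finset.univ.filter (fun i => (z i).1 ∈ Set.Icc 0 ((j : ℝ) / ((4 ^ (T + 2) : ℕ) : ℝ)) ∧
        (z i).2 ∈ Set.Icc 0 ((k : ℝ) / ((4 ^ T : ℕ) : ℝ)))) =
        (Finset.univ.filter (fun i => (z i).1 ≤ ((j : ℝ) / ((4 ^ (T + 2) : ℕ) : ℝ)) ∧
        (z i).2 ≤ ((k : ℝ) / ((4 ^ T : ℕ) : ℝ)))) := by
      apply Finset.filter_congr
      intro i _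
      have hi := hz i
      simp only [Set.mem_prod, Set.mem_Ico] at hi
      simp only [Set.mem_Icc, hi.1.1, hi.2.1, true_and]
    rw [e]
    unfold DD
    field_simp
    ring
  have hlog : Real.log m ≤ (T + 1) * 2 := by
    have h1 : Real.log m ≤ Real.log ((4 : ℝ) ^ (T + 1)) :=
      Real.log_le_log hm0 (by exact_mod_cast hT2.le)
    rw [Real.log_pow] at h1
    have h2 : Real.log 4 ≤ 2 := by
      rw [show (4 : ℝ) = 2 ^ 2 by norm_num, Real.log_pow]
      have := Real.log_two_lt_d9
      push_cast; linarith
    refine h1.trans ?_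
    push_cast
    gcongr
  linarith
end

section
/- Let d ≥ 2 and 1 ≤ b < d with gcd(b,d) = 1, and suppose b/d = [a₁,…,a_k] := 1/(a₁ + 1/(a₂ + ⋯ + 1/a_k)) with positive integers a_j; set A = max_j a_j. Let Z_{b,d} = {({n/d}, {bn/d}) : n = 0, 1, …, d−1} ⊂ [0,1)², where {·} denotes fractional part. Then Disc(Z_{b,d}) ≤ (4A/log(A+1) + (4A+1)/log d)·(log d)/d. -/
open scoped Classical

/-- The finite continued fraction `[a₁,…,a_k] = 1/(a₁ + 1/(a₂ + ⋯ + 1/a_k))`. -/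
def cf : List ℤ → ℚ
  | [] => 0
  | a :: t => 1 / ((a : ℚ) + cf t)

lemma resid_sum (q : ℕ) (p m : ℤ) (hq : 0 < q) (hc : IsCoprime p (q:ℤ)) :
    ∑ i ∈ Finset.range q, ((m + i * p) % (q:ℤ)) = ∑ r ∈ Finset.range q, (r:ℤ) := by
  have hq' : (0:ℤ) < q := by exact_mod_cast hq
  have hmaps : ∀ i ∈ Finset.range q, ((m + i * p) % (q:ℤ)).toNat ∈ Finset.range q := by
    intro i _
    have h1 := Int.emod_nonneg (m + i * p) hq'.ne'
    have h2 := Int.emod_lt_of_pos (m + i * p) hq'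
    simp only [Finset.mem_range]; omega
  have hinj : Set.InjOn (fun i : ℕ => ((m + i * p) % (q:ℤ)).toNat) (Finset.range q : Set ℕ) := by
    intro i hi j hj hij
    simp only [Finset.coe_range, Set.mem_Iio] at hi hj
    simp only at hij
    have h1 := Int.emod_nonneg (m + i * p) hq'.ne'
    have h2 := Int.emod_nonneg (m + j * p) hq'.ne'
    have h3 : (m + i * p) % (q:ℤ) = (m + j * p) % (q:ℤ) := by omega
    have h5 : (q:ℤ) ∣ (m + i * p) - (m + j * p) := Int.ModEq.dvd (Eq.symm h3)
    have h6 : (q:ℤ) ∣ ((i:ℤ) - j) * p := by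
      convert h5 using 1; ring
    have h7 : (q:ℤ) ∣ (i:ℤ) - j := hc.symm.dvd_of_dvd_mul_right h6
    have h8 : (i:ℤ) - j = 0 := Int.eq_zero_of_abs_lt_dvd h7 (by rw [abs_lt]; constructor <;> omega)
    omega
  refine Finset.sum_nbij (fun i : ℕ => ((m + i * p) % (q:ℤ)).toNat) hmaps hinj ?_ ?_
  · exact Finset.surjOn_of_injOn_of_card_le _ hmaps hinj le_rfl
  · intro i _
    have h1 := Int.emod_nonneg (m + i * p) hq'.ne'
    omega

lemma herm (q : ℕ) (p : ℤ) (hq : 0 < q) (hc : IsCoprime p (q:ℤ)) :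
    ∃ C : ℤ, ∀ m : ℤ, ∑ i ∈ Finset.range q, ((m + i * p) / (q:ℤ)) = m + C := by
  have hq' : (0:ℤ) < q := by exact_mod_cast hq
  have key : ∀ m : ℤ, (q:ℤ) * ∑ i ∈ Finset.range q, ((m + i * p) / (q:ℤ)) =
      q * m + (∑ i ∈ Finset.range q, (i * p : ℤ)) - ∑ r ∈ Finset.range q, (r:ℤ) := by
    intro m
    rw [← resid_sum q p m hq hc, Finset.mul_sum]
    have : (q:ℤ) * m = ∑ i ∈ Finset.range q, m := by simp
    rw [this, ← Finset.sum_add_distrib, ← Finset.sum_sub_distrib]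
    refine Finset.sum_congr rfl fun i _ => ?_
    have := Int.emod_add_mul_ediv (m + i * p) q
    linarith
  refine ⟨∑ i ∈ Finset.range q, ((0 + i * p) / (q:ℤ)), fun m => ?_⟩
  have h1 := key m
  have h2 := key 0
  apply mul_left_cancel₀ hq'.ne'
  rw [mul_add, h1, h2]; ring

lemma ind_eq (d u v x : ℤ) (hd : 0 < d) (hu : 0 ≤ u) (huv : u ≤ v) (hv : v ≤ d) :
    (if u ≤ x % d ∧ x % d < v then (1:ℤ) else 0) = (x - u) / d - (x - v) / d := by
  have h1 := Int.emod_nonneg x hd.ne'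
  have h2 := Int.emod_lt_of_pos x hd
  have h3 := Int.emod_add_mul_ediv x d
  have key : ∀ w, 0 ≤ w → w ≤ d → (x - w) / d = if w ≤ x % d then x / d else x / d - 1 := by
    intro w hw hwd
    split_ifs with h
    · rw [Int.ediv_eq_iff_of_pos hd]; constructor <;> nlinarith
    · rw [Int.ediv_eq_iff_of_pos hd]; constructor <;> nlinarith
  rw [key u hu (by omega), key v (by omega) hv]
  split_ifs <;> omega

lemma block_floor (b d p : ℤ) (q : ℕ) (hd : 0 < d) (hq : 0 < q) (hc : IsCoprime p (q:ℤ))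
    (hap : |b * q - d * p| * q ≤ d) :
    ∃ C : ℤ, ∀ y : ℤ, (q * y) / d + C ≤ ∑ i ∈ Finset.range q, ((y + b * i) / d) ∧
      ∑ i ∈ Finset.range q, ((y + b * i) / d) ≤ (q * y) / d + C + 1 := by
  have hq' : (0:ℤ) < q := by exact_mod_cast hq
  obtain ⟨C, hC⟩ := herm q p hq hc
  rcases le_total 0 (b * q - d * p) with hs | hs
  · rw [abs_of_nonneg hs] at hap
    refine ⟨C, fun y => ⟨?_, ?_⟩⟩
    · rw [← hC]
      refine Finset.sum_le_sum fun i hi => ?_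
      rw [Int.le_ediv_iff_mul_le hd]
      have h1 := Int.ediv_mul_le (q * y / d + i * p) hq'.ne'
      have h2 := Int.ediv_mul_le (q * y) hd.ne'
      set z := (q * y / d + i * p) / (q:ℤ)
      have hi0 : (0:ℤ) ≤ i := by positivity
      have h3 := mul_nonneg hi0 hs
      refine le_of_mul_le_mul_right ?_ hq'
      nlinarith
    · have := hC (q * y / d + 1)
      rw [show (q * y) / d + C + 1 = q * y / d + 1 + C by ring, ← this]
      refine Finset.sum_le_sum fun i hi => ?_
      rw [Int.le_ediv_iff_mul_le hq']
      have h1 := Int.ediv_mul_le (y + b * i) hd.ne'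
      set k := (y + b * i) / d
      have hi0 : (i:ℤ) ≤ q := by simp at hi; omega
      have h3 := mul_le_mul_of_nonneg_right hi0 hs
      have : k * q - i * p - 1 ≤ q * y / d := by
        rw [Int.le_ediv_iff_mul_le hd]
        nlinarith
      linarith
  · rw [abs_of_nonpos hs] at hap
    refine ⟨C - 1, fun y => ⟨?_, ?_⟩⟩
    · have := hC (q * y / d - 1)
      rw [show (q * y) / d + (C - 1) = q * y / d - 1 + C by ring, ← this]
      refine Finset.sum_le_sum fun i hi => ?_
      rw [Int.le_ediv_iff_mul_le hd]
      have h1 := Int.ediv_mul_le (q * y / d - 1 + i * p) hq'.ne'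
      have h2 := Int.ediv_mul_le (q * y) hd.ne'
      set z := (q * y / d - 1 + i * p) / (q:ℤ)
      have hi0 : (i:ℤ) ≤ q := by simp at hi; omega
      have h3 := mul_le_mul_of_nonneg_right hi0 (neg_nonneg.2 hs)
      refine le_of_mul_le_mul_right ?_ hq'
      nlinarith
    · rw [show (q * y) / d + (C - 1) + 1 = q * y / d + C by ring, ← hC]
      refine Finset.sum_le_sum fun i hi => ?_
      rw [Int.le_ediv_iff_mul_le hq']
      have h1 := Int.ediv_mul_le (y + b * i) hd.ne'
      set k := (y + b * i) / d
      have hi0 : (0:ℤ) ≤ i := by positivity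
      have h3 := mul_nonneg hi0 (neg_nonneg.2 hs)
      have : k * q - i * p ≤ q * y / d := by
        rw [Int.le_ediv_iff_mul_le hd]
        nlinarith
      linarith

/-- deviation -/
noncomputable def dev (b d u v n : ℤ) : ℝ :=
  ((if u ≤ (b * n) % d ∧ (b * n) % d < v then (1:ℤ) else 0 : ℤ) : ℝ) - ((v:ℝ) - u) / d

lemma block_dev (b d p u v : ℤ) (q : ℕ) (hd : 0 < d) (hq : 0 < q) (hc : IsCoprime p (q:ℤ))
    (hap : |b * q - d * p| * q ≤ d) (hu : 0 ≤ u) (huv : u ≤ v) (hv : v ≤ d) (s : ℤ) :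
    |∑ i ∈ Finset.range q, dev b d u v (s + i)| ≤ 2 := by
  obtain ⟨C, hC⟩ := block_floor b d p q hd hq hc hap
  have hdR : (0:ℝ) < d := by exact_mod_cast hd
  have hsum : ∑ i ∈ Finset.range q, dev b d u v (s + i) =
      ((∑ i ∈ Finset.range q, ((b * s - u + b * i) / d) : ℤ) : ℝ)
      - ((∑ i ∈ Finset.range q, ((b * s - v + b * i) / d) : ℤ) : ℝ) - q * (((v:ℝ) - u) / d) := by
    have : (q:ℝ) * (((v:ℝ) - u) / d) = ∑ i ∈ Finset.range q, (((v:ℝ) - u) / d) := by simp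
    rw [this]
    push_cast
    rw [← Finset.sum_sub_distrib, ← Finset.sum_sub_distrib]
    refine Finset.sum_congr rfl fun i _ => ?_
    unfold dev
    rw [ind_eq d u v _ hd hu huv hv]
    push_cast
    rw [show b * (s + i) - u = b * s - u + b * i by ring,
      show b * (s + i) - v = b * s - v + b * i by ring]
  rw [hsum]
  obtain ⟨h1, h2⟩ := hC (b * s - u)
  obtain ⟨h3, h4⟩ := hC (b * s - v)
  have fl : ∀ x : ℤ, ((x / d : ℤ) : ℝ) ≤ x / d ∧ (x:ℝ) / d - 1 ≤ ((x / d : ℤ) : ℝ) := by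
    intro x
    have a1 := Int.ediv_mul_le x hd.ne'
    have a2 := Int.lt_ediv_add_one_mul_self x hd
    have a1' : ((x / d : ℤ) : ℝ) * d ≤ x := by exact_mod_cast a1
    have a2' : (x:ℝ) < (((x / d : ℤ) : ℝ) + 1) * d := by exact_mod_cast a2
    constructor
    · rwa [le_div_iff₀ hdR]
    · rw [sub_le_iff_le_add, div_le_iff₀ hdR]; exact a2'.le
  obtain ⟨f1, f2⟩ := fl (q * (b * s - u))
  obtain ⟨f3, f4⟩ := fl (q * (b * s - v))
  have e : (((q * (b * s - u) : ℤ)):ℝ) / d - ((q * (b * s - v) : ℤ):ℝ) / d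
     = q * (((v:ℝ) - u) / d) := by
    push_cast; field_simp; ring
  generalize ∑ i ∈ Finset.range q, ((b * s - u + b * i) / d) = X at *
  generalize ∑ i ∈ Finset.range q, ((b * s - v + b * i) / d) = Y at *
  have h1' : ((q * (b * s - u) / d : ℤ) : ℝ) + C ≤ X := by exact_mod_cast h1
  have h2' : (X:ℝ) ≤ ((q * (b * s - u) / d : ℤ) : ℝ) + C + 1 := by exact_mod_cast h2
  have h3' : ((q * (b * s - v) / d : ℤ) : ℝ) + C ≤ Y := by exact_mod_cast h3
  have h4' : (Y:ℝ) ≤ ((q * (b * s - v) / d : ℤ) : ℝ) + C + 1 := by exact_mod_cast h4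
  rw [abs_le]; constructor <;> linarith

lemma step_bound (f : ℤ → ℝ) (q q' : ℕ) (hqq : q' ≤ q) (B : ℝ)
    (hB : ∀ s : ℤ, ∀ N : ℕ, N ≤ q → |∑ i ∈ Finset.range N, f (s + i)| ≤ B)
    (hblk : ∀ s : ℤ, |∑ i ∈ Finset.range q, f (s + i)| ≤ 2) (a : ℕ) :
    ∀ s : ℤ, ∀ N : ℕ, N ≤ a * q + q' → |∑ i ∈ Finset.range N, f (s + i)| ≤ B + 2 * a := by
  induction a with
  | zero =>
    intro s N hN
    have := hB s N (by omega)
    simpa using this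
  | succ a ih =>
    intro s N hN
    by_cases h : N ≤ q
    · have := hB s N h
      push_cast
      have : (0:ℝ) ≤ a := by positivity
      linarith
    · obtain ⟨M, rfl⟩ := Nat.exists_eq_add_of_le (not_le.1 h).le
      have h1 := ih (s + q) M (by rw [add_mul] at hN; omega)
      rw [Finset.sum_range_add]
      have h2 := hblk s
      have : ∑ x ∈ Finset.range M, f (s + ((q + x : ℕ) : ℤ)) =
          ∑ x ∈ Finset.range M, f (s + q + x) := by
        refine Finset.sum_congr rfl fun i _ => ?_
        push_cast; rw [add_assoc]
      rw [this]
      refine (abs_add_le _ _).trans ?_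
      push_cast; linarith

lemma cf_bd (t : List ℤ) (hpos : ∀ a ∈ t, 1 ≤ a) : 0 ≤ cf t ∧ cf t ≤ 1 := by
  induction t with
  | nil => simp [cf]
  | cons a t ih =>
    obtain ⟨h1, h2⟩ := ih (fun x hx => hpos x (List.mem_cons_of_mem _ hx))
    have ha : (1:ℚ) ≤ a := by exact_mod_cast hpos a List.mem_cons_self
    simp only [cf]
    constructor
    · positivity
    · rw [div_le_one (by linarith)]; linarith

lemma main_ind (b d u v A : ℤ) (K : ℝ) (hK0 : 0 ≤ K)
    (hK : ∀ a : ℕ, 1 ≤ a → (a:ℤ) ≤ A → (a:ℝ) ≤ K * Real.log (a + 1))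
    (hd : 0 < d) (hgcd : IsCoprime b d) (hu : 0 ≤ u) (huv : u ≤ v) (hv : v ≤ d)
    (t : List ℤ) : ∀ (p p' : ℤ) (q q' : ℕ) (S : ℝ), (∀ a ∈ t, 1 ≤ a ∧ a ≤ A) → 
      1 ≤ q' → q' ≤ q → |p' * q - p * q'| = 1 →
      (b:ℚ) * (q + cf t * q') = d * (p + cf t * p') →
      (∀ s : ℤ, ∀ N : ℕ, N ≤ q → |∑ i ∈ Finset.range N, dev b d u v (s + i)| ≤ 2 * S) →
      S ≤ K * Real.log (2 * q * q') →
      ∃ T : ℝ, (∀ s : ℤ, ∀ N : ℕ, (N:ℤ) ≤ d → |∑ i ∈ Finset.range N, dev b d u v (s + i)| ≤ 2 * T)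
        ∧ T ≤ K * Real.log (2 * d * d) := by
  induction t with
  | nil =>
    intro p p' q q' S _ hq' hqq hdet hx hE hS
    simp only [cf, zero_mul, add_zero] at hx
    have hx' : b * q = d * p := by exact_mod_cast hx
    have h1 : d ∣ (q:ℤ) := hgcd.symm.dvd_of_dvd_mul_left ⟨p, hx'⟩
    have h2 : (q:ℤ) ∣ d := by
      have hc : IsCoprime (q:ℤ) p := by
        rcases eq_or_eq_neg_of_abs_eq hdet with h | h
        · exact ⟨p', -q', by linarith⟩
        · exact ⟨-p', q', by linarith⟩
      exact hc.dvd_of_dvd_mul_right ⟨b, by linarith⟩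
    have h3 : (q:ℤ) = d := Int.dvd_antisymm (by positivity) hd.le h2 h1
    refine ⟨S, fun s N hN => hE s N (by omega), hS.trans ?_⟩
    have h4 : (q:ℝ) = d := by exact_mod_cast h3
    have h5 : (q':ℝ) ≤ d := by rw [← h4]; exact_mod_cast hqq
    have h6 : (0:ℝ) < q' := by exact_mod_cast hq'
    have h7 : (0:ℝ) < d := by exact_mod_cast hd
    rw [h4]
    gcongr
  | cons a t ih =>
    intro p p' q q' S ht hq' hqq hdet hx hE hS
    obtain ⟨ha1, haA⟩ := ht a List.mem_cons_self
    lift a to ℕ using by omega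
    have ht' : ∀ a ∈ t, 1 ≤ a ∧ a ≤ A := fun x hx => ht x (List.mem_cons_of_mem _ hx)
    obtain ⟨hy0, hy1⟩ := cf_bd t (fun x hx => (ht' x hx).1)
    obtain ⟨hx0, hx1⟩ := cf_bd (a :: t) (fun x hx => (ht x hx).1)
    have hc : IsCoprime p (q:ℤ) := by
      rcases eq_or_eq_neg_of_abs_eq hdet with h | h
      · exact ⟨-q', p', by linarith⟩
      · exact ⟨q', -p', by linarith⟩
    have hap : |b * q - d * p| * q ≤ d := by
      have e1 : ((b * q - d * p : ℤ) : ℚ) * (q + cf (a :: t) * q') =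
          d * cf (a :: t) * ((p' * q - p * q' : ℤ) : ℚ) := by
        push_cast
        linear_combination (q:ℚ) * hx
      have e2 := congrArg abs e1
      have hdQ : (0:ℚ) < d := by exact_mod_cast hd
      rw [abs_mul, abs_mul (_ * _), abs_of_nonneg (by positivity : (0:ℚ) ≤ q + cf (a :: t) * q'),
        abs_of_nonneg (by positivity : (0:ℚ) ≤ d * cf (a :: t)), ← Int.cast_abs, ← Int.cast_abs,
        hdet] at e2
      have e3 : ((|b * q - d * p| : ℤ) : ℚ) * q ≤ d := by
        have : (0:ℚ) ≤ ((|b * q - d * p| : ℤ) : ℚ) := by exact_mod_cast abs_nonneg _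
        have h1 : (0:ℚ) ≤ ((|b * q - d * p| : ℤ) : ℚ) * (cf (a :: t) * q') := by positivity
        push_cast at *
        nlinarith
      exact_mod_cast e3
    have hblk := block_dev b d p u v q hd (by omega) hc hap hu huv hv
    have hE' := step_bound (dev b d u v) q q' hqq _ hE hblk a
    refine ih (a * p + p') p (a * q + q') q (S + a) ht' (by omega) (by nlinarith) ?_ ?_ ?_ ?_
    · rw [← hdet, ← abs_neg]; congr 1; push_cast; ring
    · simp only [cf] at hx
      have ha1' : (1:ℚ) ≤ a := by exact_mod_cast ha1
      have hne : (a:ℚ) + cf t ≠ 0 := by positivity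
      push_cast at hx ⊢
      field_simp at hx
      linarith
    · intro s N hN
      have := hE' s N hN
      linarith
    · have h1 := hK a (by omega) haA
      have hq0 : (0:ℝ) < q' := by exact_mod_cast hq'
      have hq1 : (q':ℝ) ≤ q := by exact_mod_cast hqq
      have hq2 : (0:ℝ) < q := by linarith
      have ha0 : (0:ℝ) ≤ a := by positivity
      have h2 : K * Real.log (2 * q * q') + K * Real.log (a + 1) ≤
          K * Real.log (2 * ((a * q + q' : ℕ) : ℝ) * q) := by
        rw [← mul_add, ← Real.log_mul (by positivity) (by positivity)]
        refine mul_le_mul_of_nonneg_left (Real.log_le_log (by positivity) ?_) hK0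
        push_cast
        have := mul_le_mul_of_nonneg_left hq1 ha0
        have := mul_le_mul_of_nonneg_right this hq2.le
        nlinarith
      linarith

lemma discr (d : ℤ) (hd : 0 < d) (a b : ℝ) (ha : 0 ≤ a) (hab : a ≤ b) (hb : b ≤ 1) :
    ∃ u v : ℕ, u ≤ v ∧ (v:ℤ) ≤ d ∧ |((v:ℝ) - u) - d * (b - a)| ≤ 1 ∧
      ∀ n : ℤ, 0 ≤ n → n < d →
        ((n:ℝ) / d ∈ Set.Icc a b ↔ (u:ℤ) ≤ n ∧ n < v) := by
  have hdR : (0:ℝ) < d := by exact_mod_cast hd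
  have h0 : 0 ≤ a * d := by positivity
  have h1 : a * d ≤ b * d := by gcongr
  have h2 : b * d ≤ d := by nlinarith
  have hu0 : 0 ≤ ⌈a * d⌉ := Int.ceil_nonneg h0
  have hv0 : 0 ≤ ⌊b * d⌋ := Int.floor_nonneg.2 (h0.trans h1)
  have c1 := Int.le_ceil (a * d)
  have c2 := Int.ceil_lt_add_one (a * d)
  have c3 := Int.floor_le (b * d)
  have c4 := Int.lt_floor_add_one (b * d)
  have hud : ⌈a * d⌉ ≤ d := Int.ceil_le.2 (h1.trans h2)
  have huv : ⌈a * d⌉ ≤ ⌊b * d⌋ + 1 := by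
    refine Int.ceil_le.2 ?_
    push_cast; linarith
  obtain ⟨u, hu⟩ := Int.eq_ofNat_of_zero_le hu0
  obtain ⟨v, hv⟩ := Int.eq_ofNat_of_zero_le (show 0 ≤ min (⌊b * d⌋ + 1) d by omega)
  have huR : (u:ℝ) = (⌈a * d⌉ : ℝ) := by rw [hu]; simp
  have hvR : (v:ℝ) = ((min (⌊b * d⌋ + 1) d : ℤ) : ℝ) := by rw [hv]; simp
  refine ⟨u, v, by omega, by omega, ?_, ?_⟩
  · have e1 : b * d ≤ v := by
      rw [hvR]; push_cast; exact le_min c4.le h2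
    have e2 : (v:ℝ) ≤ b * d + 1 := by
      rw [hvR]; push_cast; exact (min_le_left _ _).trans (by linarith)
    rw [abs_le]; constructor <;> nlinarith
  · intro n hn hnd
    rw [← hu, ← hv, Set.mem_Icc, le_div_iff₀ hdR, div_le_iff₀ hdR, Int.ceil_le, lt_min_iff,
      Int.lt_add_one_iff, Int.le_floor]
    tauto

lemma K_bound (A : ℤ) (a : ℕ) (ha : 1 ≤ a) (haA : (a:ℤ) ≤ A) :
    (a:ℝ) ≤ (A:ℝ) / Real.log ((A:ℝ) + 1) * Real.log (a + 1) := by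
  have ha1 : (1:ℝ) ≤ a := by exact_mod_cast ha
  have hA : (a:ℝ) ≤ A := by exact_mod_cast haA
  have hA0 : (0:ℝ) < A := by linarith
  have hl : 0 < Real.log ((A:ℝ) + 1) := Real.log_pos (by linarith)
  have h := rpow_one_add_le_one_add_mul_self (s := (A:ℝ)) (by linarith) (p := (a:ℝ) / A)
    (by positivity) (by rw [div_le_one hA0]; exact hA)
  have h2 := Real.log_le_log (by positivity) h
  rw [Real.log_rpow (by positivity), div_mul_cancel₀ _ hA0.ne', add_comm 1 (A:ℝ),
    add_comm 1 (a:ℝ)] at h2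
  have h3 := mul_le_mul_of_nonneg_left h2 (div_nonneg hA0.le hl.le)
  refine le_trans (le_of_eq ?_) h3
  field_simp

lemma dev_le (b d u v n : ℤ) (hd : 0 < d) (hu : 0 ≤ u) (huv : u ≤ v) (hv : v ≤ d) :
    |dev b d u v n| ≤ 1 := by
  have hdR : (0:ℝ) < d := by exact_mod_cast hd
  have h1 : (0:ℝ) ≤ ((v:ℝ) - u) / d :=
    div_nonneg (by have : (u:ℝ) ≤ v := by exact_mod_cast huv
                   linarith) hdR.le
  have h2 : ((v:ℝ) - u) / d ≤ 1 := by
    rw [div_le_one hdR]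
    have : (0:ℝ) ≤ u := by exact_mod_cast hu
    have : (v:ℝ) ≤ d := by exact_mod_cast hv
    linarith
  unfold dev
  rw [abs_le]
  split_ifs <;> constructor <;> push_cast <;> linarith

lemma all_bound (b d : ℤ) (hd : 2 ≤ d) (hb : 1 ≤ b)
    (hgcd : Int.gcd b d = 1)
    (l : List ℤ) (hne : l ≠ []) (hpos : ∀ a ∈ l, 1 ≤ a)
    (hcf : cf l = (b : ℚ) / (d : ℚ))
    (A : ℤ) (hAmax : ∀ a ∈ l, a ≤ A) (hA1 : 1 ≤ A)
    (u v : ℤ) (hu : 0 ≤ u) (huv : u ≤ v) (hv : v ≤ d) :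
    ∃ T : ℝ, (∀ s : ℤ, ∀ N : ℕ, (N:ℤ) ≤ d → |∑ i ∈ Finset.range N, dev b d u v (s + i)| ≤ 2 * T)
        ∧ T ≤ (A:ℝ) / Real.log ((A:ℝ) + 1) * Real.log (2 * d * d) := by
  have hA : (1:ℝ) ≤ A := by exact_mod_cast hA1
  have hK0 : 0 ≤ (A:ℝ) / Real.log ((A:ℝ) + 1) :=
    div_nonneg (by linarith) (Real.log_nonneg (by linarith))
  match l, hne with
  | a :: t, _ =>
    have ha1 := hpos a List.mem_cons_self
    have haA := hAmax a List.mem_cons_self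
    lift a to ℕ using by omega
    have ha1' : (1:ℝ) ≤ a := by exact_mod_cast ha1
    refine main_ind b d u v A _ hK0 (K_bound A) (by omega) (Int.isCoprime_iff_gcd_eq_one.2 hgcd)
      hu huv hv t 1 0 a 1 a
      (fun x hx => ⟨hpos x (List.mem_cons_of_mem _ hx), hAmax x (List.mem_cons_of_mem _ hx)⟩)
      le_rfl (by omega) (by simp) ?_ ?_ ?_
    · obtain ⟨hy0, hy1⟩ := cf_bd t (fun x hx => hpos x (List.mem_cons_of_mem _ hx))
      simp only [cf] at hcf
      have ha1' : (1:ℚ) ≤ a := by exact_mod_cast ha1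
      have hne : (a:ℚ) + cf t ≠ 0 := by positivity
      have hdQ : (d:ℚ) ≠ 0 := by
        have : d ≠ 0 := by omega
        exact_mod_cast this
      push_cast at hcf ⊢
      rw [div_eq_div_iff hne hdQ] at hcf
      linarith
    · intro s N hN
      refine (Finset.abs_sum_le_sum_abs _ _).trans ?_
      refine (Finset.sum_le_sum fun (i:ℕ) _ => dev_le b d u v (s + (i:ℕ)) (by omega) hu huv hv).trans ?_
      have : (N:ℝ) ≤ a := by exact_mod_cast hN
      simp; linarith
    · refine (K_bound A a (by omega) haA).trans ?_
      refine mul_le_mul_of_nonneg_left (Real.log_le_log (by positivity) ?_) hK0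
      push_cast; linarith

theorem stmt2 (b d : ℤ) (hd : 2 ≤ d) (hb : 1 ≤ b) (hbd : b < d)
    (hgcd : Int.gcd b d = 1)
    (l : List ℤ) (hne : l ≠ []) (hpos : ∀ a ∈ l, 1 ≤ a)
    (hcf : cf l = (b : ℚ) / (d : ℚ))
    (A : ℤ) (hAmem : A ∈ l) (hAmax : ∀ a ∈ l, a ≤ A)
    (z : Fin d.toNat → ℝ × ℝ)
    (hz : ∀ n : Fin d.toNat, z n =
      (Int.fract ((n : ℝ) / (d : ℝ)), Int.fract ((b : ℝ) * (n : ℝ) / (d : ℝ)))) :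
    Disc z ≤ (4 * (A : ℝ) / Real.log ((A : ℝ) + 1)
        + (4 * (A : ℝ) + 1) / Real.log (d : ℝ)) * Real.log (d : ℝ) / (d : ℝ) := by
  have hd0 : 0 < d := by omega
  have hdR : (0:ℝ) < d := by exact_mod_cast hd0
  have hd2 : (2:ℝ) ≤ d := by exact_mod_cast hd
  have hA1 : 1 ≤ A := hpos A hAmem
  have hA : (1:ℝ) ≤ A := by exact_mod_cast hA1
  have hm : ((d.toNat : ℕ) : ℤ) = d := Int.toNat_of_nonneg hd0.le
  have hmR : ((d.toNat : ℕ) : ℝ) = d := by exact_mod_cast hm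
  have hlogd : 0 < Real.log d := Real.log_pos (by linarith)
  have hlogA : 0 < Real.log ((A:ℝ) + 1) := Real.log_pos (by linarith)
  unfold Disc
  apply csSup_le
  · exact ⟨_, 0, 0, 0, 0, le_rfl, le_rfl, zero_le_one, le_rfl, le_rfl, zero_le_one, rfl⟩
  rintro _ ⟨α, β, γ, δ, h1, h2, h3, h4, h5, h6, rfl⟩
  obtain ⟨u', v', huv', hv', hN, hiff'⟩ := discr d hd0 α β h1 h2 h3
  obtain ⟨u, v, huv, hv, hL, hiff⟩ := discr d hd0 γ δ h4 h5 h6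
  obtain ⟨T, hT, hTle⟩ := all_bound b d hd hb hgcd l hne hpos hcf A hAmax hA1 u v (by positivity)
    (by exact_mod_cast huv) hv
  have hTb := hT u' (v' - u') (by omega)
  have hcard : (((Finset.univ.filter
            (fun i => (z i).1 ∈ Set.Icc α β ∧ (z i).2 ∈ Set.Icc γ δ)).card : ℕ) : ℝ) =
      ∑ i ∈ Finset.range (v' - u'), dev b d u v (u' + i) + ((v':ℝ) - u') * (((v:ℝ) - u) / d) := by
    have e1 : (Finset.univ.filter
            (fun i => (z i).1 ∈ Set.Icc α β ∧ (z i).2 ∈ Set.Icc γ δ)).card =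
        ((Finset.Ico u' v').filter (fun n : ℕ => (u:ℤ) ≤ (b * n) % d ∧ (b * n) % d < v)).card := by
      have key : ∀ i : Fin d.toNat, ((z i).1 ∈ Set.Icc α β ∧ (z i).2 ∈ Set.Icc γ δ) ↔
          ((i:ℕ) ∈ Finset.Ico u' v' ∧ (u:ℤ) ≤ (b * (i:ℕ)) % d ∧ (b * (i:ℕ)) % d < v) := by
        intro i
        have hi : ((i:ℕ):ℤ) < d := by have := i.2; omega
        have f1 : Int.fract (((i:ℕ):ℝ) / d) = ((i:ℕ):ℤ) / d := by
          rw [Int.fract_eq_self.2]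
          · simp
          · constructor
            · positivity
            · rw [div_lt_one hdR]; exact_mod_cast hi
        have f2 : Int.fract ((b:ℝ) * ((i:ℕ):ℝ) / d) = (((b * (i:ℕ)) % d : ℤ) : ℝ) / d := by
          have := Int.fract_div_intCast_eq_div_intCast_mod (k := ℝ) (m := b * (i:ℕ)) (n := d.toNat)
          rw [hm, hmR] at this
          rw [← this]; push_cast; rfl
        rw [hz i]
        rw [f1, f2, hiff' _ (by positivity) hi,
          hiff _ (Int.emod_nonneg _ hd0.ne') (Int.emod_lt_of_pos _ hd0), Finset.mem_Ico]
        norm_cast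
      refine Finset.card_nbij (fun i => (i:ℕ)) ?_ ?_ ?_
      · intro i hi
        have hi := (Finset.mem_filter.1 (Finset.mem_coe.1 hi)).2
        refine Finset.mem_coe.2 (Finset.mem_filter.2 ?_)
        exact (key i).1 hi
      · intro i _ j _ hij
        exact Fin.ext hij
      · intro n hn
        have hn' := Finset.mem_filter.1 (Finset.mem_coe.1 hn)
        have hn2 := Finset.mem_Ico.1 hn'.1
        refine ⟨⟨n, by omega⟩, ?_, rfl⟩
        simp only [Finset.coe_filter, Finset.mem_univ, true_and, Set.mem_ofPred_eq]
        exact (key _).2 hn'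
    rw [e1, Finset.card_filter, Finset.sum_Ico_eq_sum_range]
    have : ((v':ℝ) - u') * (((v:ℝ) - u) / d) =
        ∑ i ∈ Finset.range (v' - u'), (((v:ℝ) - u) / d) := by
      rw [Finset.sum_const, Finset.card_range, nsmul_eq_mul, Nat.cast_sub huv']
    rw [this, ← Finset.sum_add_distrib]
    push_cast
    refine Finset.sum_congr rfl fun i _ => ?_
    unfold dev
    push_cast
    ring
  rw [hcard, hmR]
  generalize (∑ i ∈ Finset.range (v' - u'), dev b d u v (u' + i)) = X at *
  have hR : (4 * (A : ℝ) / Real.log ((A : ℝ) + 1)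
        + (4 * (A : ℝ) + 1) / Real.log (d : ℝ)) * Real.log (d : ℝ) =
      4 * (A / Real.log ((A : ℝ) + 1) * Real.log d) + (4 * A + 1) := by
    field_simp
  rw [hR]
  have hlog : Real.log (2 * d * d) = Real.log 2 + 2 * Real.log d := by
    rw [Real.log_mul (by positivity) (by positivity), Real.log_mul (by positivity) (by positivity)]
    ring
  have hlog2 : (A:ℝ) / Real.log ((A : ℝ) + 1) * Real.log 2 ≤ A := by
    have : Real.log 2 ≤ Real.log ((A:ℝ) + 1) := Real.log_le_log (by norm_num) (by linarith)
    rw [div_mul_eq_mul_div, div_le_iff₀ hlogA]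
    exact mul_le_mul_of_nonneg_left this (by linarith)
  rw [hlog, mul_add] at hTle
  rw [le_div_iff₀ hdR]
  have hdd : |(X + ((v':ℝ) - u') * (((v:ℝ) - u) / d)) / d - (β - α) * (δ - γ)| * d =
      |X + (((v':ℝ) - u') / d * (((v:ℝ) - u) - d * (δ - γ)) +
        (((v':ℝ) - u') - d * (β - α)) * (δ - γ))| := by
    refine (congrArg (_ * ·) (abs_of_pos hdR).symm).trans ?_
    rw [← abs_mul]; congr 1; field_simp; ring
  rw [hdd]
  have b1 : |((v':ℝ) - u') / d * (((v:ℝ) - u) - d * (δ - γ))| ≤ 1 := by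
    rw [abs_mul]
    have p1 : |((v':ℝ) - u') / d| ≤ 1 := by
      have q1 : (u':ℝ) ≤ v' := by exact_mod_cast huv'
      have q2 : (v':ℝ) ≤ d := by exact_mod_cast hv'
      have q3 : (0:ℝ) ≤ u' := by positivity
      rw [abs_of_nonneg (div_nonneg (by linarith) hdR.le), div_le_one hdR]; linarith
    exact mul_le_one₀ p1 (abs_nonneg _) hL
  have b2 : |(((v':ℝ) - u') - d * (β - α)) * (δ - γ)| ≤ 1 := by
    rw [abs_mul]
    refine mul_le_one₀ hN (abs_nonneg _) ?_
    rw [abs_le]; constructor <;> linarith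
  refine (abs_add_le _ _).trans ?_
  have b3 := abs_add_le (((v':ℝ) - u') / d * (((v:ℝ) - u) - d * (δ - γ)))
    ((((v':ℝ) - u') - d * (β - α)) * (δ - γ))
  linarith
end
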